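/- Let d ≥ 2 and let ξ ∈ ℝ^d \ ℚ^d satisfy ξ₁² + ⋯ + ξ_d² = 1. Then the uniform Diophantine exponent for intrinsic approximation on the unit sphere satisfies ω̂ᵢ(ξ) = 1, where ω̂ᵢ(ξ) is the supremum of all real γ such that for every sufficiently large T the inequalities |ξ − α| ≤ 1/(q^{1/2} T^{γ/2}), 1 ≤ q ≤ T, are solvable in rational vectors α = (a₁/q, …, a_d/q) with (a₁/q)² + ⋯ + (a_d/q)² = 1. -/

import Mathlib

open Filter

/-- The "uniform intrinsic approximation at exponent `γ`" property on the unit sphere: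
for every sufficiently large `T` there is a rational point `α = (a₁/q, …, a_d/q)` of the
unit sphere with `1 ≤ q ≤ T` and `|ξ - α| ≤ 1/(q^{1/2} T^{γ/2})`.
The uniform intrinsic Diophantine exponent `ω̂ᵢ(ξ)` is the supremum of such `γ`. -/
def IntrinsicUnifApprox {d : ℕ} (ξ : Fin d → ℝ) (γ : ℝ) : Prop :=
  ∀ᶠ T : ℝ in atTop, ∃ (q : ℤ) (a : Fin d → ℤ),
    1 ≤ q ∧ (q : ℝ) ≤ T ∧ (∑ i, ((a i : ℚ) / (q : ℚ)) ^ 2) = 1 ∧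
    Real.sqrt (∑ i, (ξ i - (a i : ℝ) / (q : ℝ)) ^ 2)
      ≤ 1 / ((q : ℝ) ^ ((1 : ℝ) / 2) * T ^ (γ / 2))

/-!
Rational points of the sphere with denominator `q` are the isotropic integer vectors `(q, a)` of the
Lorentz form `q² - |a|²`, and `|ξ - a / q|² = 2 (q - ξ · a) / q`.

*Lower bound.* The hyperbolic rotation with parameter `t` multiplies `q - ξ · a` by `t` and
`q + ξ · a` by `t⁻¹`, preserves the Lorentz form, and has determinant one. The rotated integer
lattice contains an isotropic vector bounded independently of `t`. Indeed, by Minkowski's theorem it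
contains either a nonzero vector so short that its integral norm vanishes, or a basis of the whole
space consisting of bounded vectors. In the latter case the integral Gram matrix of that basis takes
only finitely many values, each of which represents zero since `(1, e₁)` is isotropic. Letting `t`
be proportional to `T` gives every exponent `γ < 1`.

*Upper bound.* Distinct rational points with denominators `q`, `p` are at squared distance at least
`2 / (q p)`. For `γ > 1`, approximants of `ξ` for `T` and `2 T` are closer than that, so along
`T = 2 ^ n T₀` they all coincide, and `ξ` is rational.
-/

open Module MeasureTheory

section Lattice

variable {E : Type*} [NormedAddCommGroup E] [NormedSpace ℝ E] [FiniteDimensional ℝ E]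
  (L : Submodule ℤ E) [DiscreteTopology L] [IsZLattice ℝ L]

lemma exists_forall_abs_det_lt_exists_mem_norm_le {ε : ℝ} (hε : 0 < ε) :
    ∃ δ > 0, ∀ φ : E →ₗ[ℝ] E, LinearMap.det φ ≠ 0 → |LinearMap.det φ| < δ →
      ∃ x ∈ L, x ≠ 0 ∧ ‖φ x‖ ≤ ε := by
  borelize E
  let μ : Measure E := Measure.addHaar
  let F := ZSpan.fundamentalDomain ((Free.chooseBasis ℤ L).ofZLatticeBasis ℝ)
  have hF : IsAddFundamentalDomain L.toAddSubgroup F μ :=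
    ZLattice.isAddFundamentalDomain (Free.chooseBasis ℤ L) μ
  have : Countable L.toAddSubgroup := inferInstanceAs (Countable L)
  have hF_top : μ F ≠ ⊤ := (ZSpan.fundamentalDomain_isBounded _).measure_lt_top.ne
  have hF_pos : 0 < μ.real F :=
    ENNReal.toReal_pos (ZSpan.measure_fundamentalDomain_ne_zero _) hF_top
  have hball_top : μ (Metric.closedBall 0 ε) ≠ ⊤ := measure_closedBall_lt_top.ne
  have hball_pos : 0 < μ.real (Metric.closedBall 0 ε) :=
    ENNReal.toReal_pos (Metric.measure_closedBall_pos μ 0 hε).ne' hball_top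
  refine ⟨μ.real (Metric.closedBall 0 ε) / (μ.real F * 2 ^ finrank ℝ E), by positivity,
    fun φ hφ hlt => ?_⟩
  have hvol : μ F * 2 ^ finrank ℝ E < μ (φ ⁻¹' Metric.closedBall 0 ε) := by
    rw [Measure.addHaar_preimage_linearMap μ hφ, ← ENNReal.toReal_lt_toReal (by finiteness)
      (by finiteness), ENNReal.toReal_mul, ENNReal.toReal_mul, ENNReal.toReal_pow,
      ENNReal.toReal_ofReal (abs_nonneg _), ENNReal.toReal_ofNat, abs_inv,
      ← div_eq_inv_mul, lt_div_iff₀' (abs_pos.2 hφ)]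
    exact (lt_div_iff₀ (by positivity)).1 hlt
  obtain ⟨⟨x, hxL⟩, hx, hφx⟩ :=
    exists_ne_zero_mem_lattice_of_measure_mul_two_pow_lt_measure hF
      (fun y hy => by simpa using hy) ((convex_closedBall 0 ε).linear_preimage φ) hvol
  exact ⟨x, hxL, fun h => hx (Subtype.ext h), by simpa using hφx⟩

lemma exists_nsmul_mem_of_le {L' : Submodule ℤ E} [DiscreteTopology L'] [IsZLattice ℝ L']
    (hle : L' ≤ L) : ∃ n : ℕ, n ≠ 0 ∧ ∀ x ∈ L, n • x ∈ L' := by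
  have hrank : finrank ℤ (L'.submoduleOf L) = finrank ℤ L := by
    rw [(Submodule.submoduleOfEquivOfLe hle).finrank_eq, ZLattice.rank ℝ L', ZLattice.rank ℝ L]
  have hfin : Finite (L ⧸ L'.submoduleOf L) := Submodule.finiteQuotientOfFreeOfRankEq _ hrank
  refine ⟨(L'.submoduleOf L).toAddSubgroup.index, ?_, fun x hx => ?_⟩
  · have : (L'.submoduleOf L).toAddSubgroup.FiniteIndex :=
      AddSubgroup.finiteIndex_iff_finite_quotient.2 hfin
    exact AddSubgroup.FiniteIndex.index_ne_zero
  · exact (L'.submoduleOf L).toAddSubgroup.nsmul_index_mem ⟨x, hx⟩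

end Lattice

section Dichotomy

open scoped InnerProductSpace

variable {E : Type*} [NormedAddCommGroup E] [InnerProductSpace ℝ E]

lemma norm_le_mul_norm_transvection_innerₗ {e : E} (he : ‖e‖ = 1) {c : ℝ} (hc : 1 ≤ c) (y : E) :
    ‖y‖ ≤ c * ‖LinearMap.transvection (innerₗ E e) ((c⁻¹ - 1) • e) y‖ := by
  set z := LinearMap.transvection (innerₗ E e) ((c⁻¹ - 1) • e) y with hz
  have hinner : ⟪e, z⟫_ℝ = c⁻¹ * ⟪e, y⟫_ℝ := by
    rw [hz, LinearMap.transvection.apply, innerₗ_apply_apply, inner_add_right, inner_smul_right,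
      inner_smul_right, real_inner_self_eq_norm_sq, he]
    ring
  have hy : y = z + ((c - 1) * ⟪e, z⟫_ℝ) • e := by
    rw [hinner, hz, LinearMap.transvection.apply, innerₗ_apply_apply]
    match_scalars
    · ring
    · field_simp
      ring
  calc ‖y‖ ≤ ‖z‖ + ‖((c - 1) * ⟪e, z⟫_ℝ) • e‖ := by
        conv_lhs => rw [hy]
        exact norm_add_le _ _
    _ = ‖z‖ + (c - 1) * |⟪e, z⟫_ℝ| := by
        rw [norm_smul, he, mul_one, norm_mul, Real.norm_of_nonneg (sub_nonneg.2 hc),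
          Real.norm_eq_abs]
    _ ≤ ‖z‖ + (c - 1) * ‖z‖ := by
        have : |⟪e, z⟫_ℝ| ≤ ‖z‖ := by simpa [he] using abs_real_inner_le_norm e z
        have : 0 ≤ c - 1 := sub_nonneg.2 hc
        gcongr
    _ = c * ‖z‖ := by ring

variable [FiniteDimensional ℝ E] (L : Submodule ℤ E) [DiscreteTopology L] [IsZLattice ℝ L]

lemma exists_norm_eq_one_forall_inner_eq_zero_of_ne_top {V : Submodule ℝ E} (hV : V ≠ ⊤) :
    ∃ e : E, ‖e‖ = 1 ∧ ∀ x ∈ V, ⟪e, x⟫_ℝ = 0 := by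
  obtain ⟨w, hwV, hw⟩ :=
    Submodule.exists_mem_ne_zero_of_ne_bot (mt Submodule.orthogonal_eq_bot_iff.1 hV)
  exact ⟨(‖w‖⁻¹ : ℝ) • w, norm_smul_inv_norm hw,
    fun x hx => (Submodule.mem_orthogonal' _ _).1 (Submodule.smul_mem _ _ hwV) x hx⟩

/- If the bounded vectors of `g L` lie in a hyperplane, contract its normal direction by a large
factor `c`. Minkowski's theorem then gives a vector of `g L` that is short after the contraction, so
it is bounded, lies in the hyperplane, and was not contracted at all. -/
lemma exists_mem_norm_le_or_span_eq_top {ε : ℝ} (hε : 0 < ε) :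
    ∃ R > 0, ∀ g : E →ₗ[ℝ] E, |LinearMap.det g| = 1 →
      (∃ x ∈ L, x ≠ 0 ∧ ‖g x‖ ≤ ε) ∨ Submodule.span ℝ {x ∈ (L : Set E) | ‖g x‖ ≤ R} = ⊤ := by
  obtain ⟨δ, hδ, hshort⟩ := exists_forall_abs_det_lt_exists_mem_norm_le L hε
  obtain ⟨c, hc, hcδ⟩ : ∃ c : ℝ, 1 ≤ c ∧ c⁻¹ < δ :=
    ((eventually_ge_atTop 1).and (tendsto_inv_atTop_zero.eventually_lt_const hδ)).exists
  have : 0 < c := by linarith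
  refine ⟨c * ε, by positivity, fun g hg => or_iff_not_imp_right.2 fun hspan => ?_⟩
  have hg0 : LinearMap.det g ≠ 0 := by rw [← abs_pos, hg]; exact one_pos
  have hmap : (Submodule.span ℝ {x ∈ (L : Set E) | ‖g x‖ ≤ c * ε}).map g ≠ ⊤ :=
    mt (Submodule.map_eq_top_iff (e := LinearMap.equivOfDetNeZero g hg0)).1 hspan
  obtain ⟨e, he, heS⟩ := exists_norm_eq_one_forall_inner_eq_zero_of_ne_top hmap
  let ψ := LinearMap.transvection (innerₗ E e) ((c⁻¹ - 1) • e)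
  have hdet : LinearMap.det (ψ ∘ₗ g) = c⁻¹ * LinearMap.det g := by
    simp [ψ, LinearMap.det_comp, he]
  obtain ⟨x, hxL, hx, hψx⟩ := hshort (ψ ∘ₗ g) (by rw [hdet]; positivity)
    (by rwa [hdet, abs_mul, hg, mul_one, abs_of_pos (by positivity)])
  have hgx : ‖g x‖ ≤ c * ε :=
    (norm_le_mul_norm_transvection_innerₗ he hc (g x)).trans (by gcongr; exact hψx)
  have horth : ⟪e, g x⟫_ℝ = 0 :=
    heS _ (Submodule.mem_map_of_mem (Submodule.subset_span ⟨hxL, hgx⟩))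
  have hfix : ψ (g x) = g x := by simp [ψ, LinearMap.transvection.apply, horth]
  exact ⟨x, hxL, hx, by rwa [LinearMap.comp_apply, hfix] at hψx⟩

end Dichotomy

lemma exists_uniform_bound_of_finite {α β : Type*} {s : Set α} (hs : s.Finite) (p : α → β → Prop)
    (f : β → ℝ) : ∃ C, ∀ a ∈ s, (∃ b, p a b) → ∃ b, p a b ∧ f b ≤ C := by
  have hbound : ∀ a ∈ s, ∃ c, (∃ b, p a b) → ∃ b, p a b ∧ f b ≤ c := fun a _ => by
    by_cases h : ∃ b, p a b
    · obtain ⟨b, hb⟩ := h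
      exact ⟨f b, fun _ => ⟨b, hb, le_rfl⟩⟩
    · exact ⟨0, fun h' => absurd h' h⟩
  choose! c hc using hbound
  obtain ⟨C, hC⟩ := (hs.image c).bddAbove
  refine ⟨C, fun a ha h => ?_⟩
  obtain ⟨b, hb, hbc⟩ := hc a ha h
  exact ⟨b, hb, hbc.trans (hC ⟨a, ha, rfl⟩)⟩

lemma exists_basis_forall_mem_of_span_eq_top {K V : Type*} [DivisionRing K] [AddCommGroup V]
    [Module K V] [FiniteDimensional K V] {S : Set V} (hS : Submodule.span K S = ⊤) :
    ∃ b : Basis (Fin (finrank K V)) K V, ∀ i, b i ∈ S := by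
  let b := Basis.ofSpan hS.ge
  refine ⟨b.reindex (b.indexEquiv (finBasis K V)), fun i => ?_⟩
  rw [Basis.reindex_apply]
  exact Basis.ofSpan_subset hS.ge ⟨_, rfl⟩

section IsotropicVector

lemma exists_intCast_eq_of_le_dualSubmodule {E : Type*} [AddCommGroup E] [Module ℝ E]
    {L : Submodule ℤ E} {B : LinearMap.BilinForm ℝ E} (hB : L ≤ B.dualSubmodule L) {x y : E}
    (hx : x ∈ L) (hy : y ∈ L) : ∃ k : ℤ, (k : ℝ) = B x y := by
  obtain ⟨k, hk⟩ := Submodule.mem_one.1 (hB hx y hy)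
  exact ⟨k, by simpa using hk⟩

variable {E : Type*} [NormedAddCommGroup E]

section Gram

variable [NormedSpace ℝ E] [FiniteDimensional ℝ E]
  {L : Submodule ℤ E} [DiscreteTopology L] [IsZLattice ℝ L]
  {B : LinearMap.BilinForm ℝ E} {v : E} {ι : Type*} [Fintype ι]

lemma exists_isotropic_intCast_sum_smul_basis (hvL : v ∈ L) (hv : v ≠ 0) (hBv : B v v = 0)
    (b : Basis ι ℝ E) (hb : ∀ i, b i ∈ L) :
    ∃ m : ι → ℤ, m ≠ 0 ∧ B (∑ i, (m i : ℝ) • b i) (∑ i, (m i : ℝ) • b i) = 0 := by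
  obtain ⟨n, hn, hmem⟩ :=
    exists_nsmul_mem_of_le L (Submodule.span_le.2 (Set.range_subset_iff.2 hb))
  obtain ⟨m, hm⟩ := (Submodule.mem_span_range_iff_exists_fun ℤ).1 (hmem v hvL)
  simp only [← Int.cast_smul_eq_zsmul ℝ, ← Nat.cast_smul_eq_nsmul ℝ] at hm
  refine ⟨m, ?_, by simp [hm, hBv]⟩
  rintro rfl
  simp [hn, hv, eq_comm (a := (0 : E))] at hm

lemma exists_forall_basis_exists_isotropic_sum_abs_le (hB : L ≤ B.dualSubmodule L)
    (hvL : v ∈ L) (hv : v ≠ 0) (hBv : B v v = 0) (M : ℝ) :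
    ∃ P : ℝ, ∀ b : Basis ι ℝ E, (∀ i, b i ∈ L) → (∀ i j, |B (b i) (b j)| ≤ M) →
      ∃ m : ι → ℤ, m ≠ 0 ∧ B (∑ i, (m i : ℝ) • b i) (∑ i, (m i : ℝ) • b i) = 0 ∧
        ∑ i, |(m i : ℝ)| ≤ P := by
  classical
  obtain ⟨P, hP⟩ := exists_uniform_bound_of_finite
    (Set.finite_Icc (fun _ _ => -⌈M⌉ : ι → ι → ℤ) (fun _ _ => ⌈M⌉))
    (fun G (m : ι → ℤ) => m ≠ 0 ∧ ∑ i, ∑ j, (m j : ℝ) * (m i * G i j) = 0)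
    (fun m => ∑ i, |(m i : ℝ)|)
  refine ⟨P, fun b hbL hbM => ?_⟩
  choose G hG using fun i j => exists_intCast_eq_of_le_dualSubmodule hB (hbL i) (hbL j)
  have hquad (m : ι → ℤ) : B (∑ i, (m i : ℝ) • b i) (∑ i, (m i : ℝ) • b i) =
      ∑ i, ∑ j, (m j : ℝ) * (m i * G i j) := by
    rw [LinearMap.BilinForm.sum_left]
    simp only [LinearMap.BilinForm.sum_right, LinearMap.BilinForm.smul_left,
      LinearMap.BilinForm.smul_right, hG]
  have hGM (i j : ι) : |G i j| ≤ ⌈M⌉ := by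
    exact_mod_cast ((hG i j).symm ▸ hbM i j : |(G i j : ℝ)| ≤ M).trans (Int.le_ceil M)
  obtain ⟨m, ⟨hm, hmG⟩, hmP⟩ := hP G
    ⟨fun i j => (abs_le.1 (hGM i j)).1, fun i j => (abs_le.1 (hGM i j)).2⟩
    (by simpa only [← hquad] using exists_isotropic_intCast_sum_smul_basis hvL hv hBv b hbL)
  exact ⟨m, hm, (hquad m).trans hmG, hmP⟩

end Gram

theorem exists_forall_isometry_exists_isotropic_norm_le [InnerProductSpace ℝ E]
    [FiniteDimensional ℝ E] {L : Submodule ℤ E} [DiscreteTopology L] [IsZLattice ℝ L]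
    {B : LinearMap.BilinForm ℝ E} {v : E} (hB : L ≤ B.dualSubmodule L)
    (hvL : v ∈ L) (hv : v ≠ 0) (hBv : B v v = 0) :
    ∃ C > 0, ∀ g : E →ₗ[ℝ] E, |LinearMap.det g| = 1 → (∀ x y, B (g x) (g y) = B x y) →
      ∃ x ∈ L, x ≠ 0 ∧ B x x = 0 ∧ ‖g x‖ ≤ C := by
  obtain ⟨K, hK, hBK⟩ := B.toContinuousBilinearMap.isBoundedBilinearMap.bound
  obtain ⟨ε, hε, hKε⟩ : ∃ ε > 0, K * ε * ε < 1 := by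
    have hlim : Tendsto (fun ε => K * ε * ε) (nhdsWithin 0 (Set.Ioi 0)) (nhds 0) :=
      tendsto_nhdsWithin_of_tendsto_nhds (Continuous.tendsto' (by fun_prop) _ _ (by simp))
    exact (eventually_mem_nhdsWithin.and (hlim.eventually_lt_const one_pos)).exists
  obtain ⟨R, hR, hdichotomy⟩ := exists_mem_norm_le_or_span_eq_top L hε
  obtain ⟨P, hP⟩ := exists_forall_basis_exists_isotropic_sum_abs_le
    (ι := Fin (finrank ℝ E)) hB hvL hv hBv (K * R * R)
  refine ⟨max ε (P * R), by positivity, fun g hdet hg => ?_⟩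
  have hbound {r : ℝ} {x y : E} (hx : ‖g x‖ ≤ r) (hy : ‖g y‖ ≤ r) : |B x y| ≤ K * r * r := by
    rw [← hg]
    have hr : 0 ≤ r := (norm_nonneg _).trans hx
    exact (hBK _ _).trans (by gcongr)
  rcases hdichotomy g hdet with ⟨x, hxL, hx, hgx⟩ | hspan
  · obtain ⟨k, hk⟩ := exists_intCast_eq_of_le_dualSubmodule hB hxL hxL
    have hk1 : |k| < 1 := by exact_mod_cast hk ▸ (hbound hgx hgx).trans_lt hKε
    refine ⟨x, hxL, hx, ?_, hgx.trans (le_max_left _ _)⟩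
    rw [← hk, Int.abs_lt_one_iff.1 hk1, Int.cast_zero]
  · obtain ⟨b, hb⟩ := exists_basis_forall_mem_of_span_eq_top hspan
    obtain ⟨m, hm, hBm, hmP⟩ := hP b (fun i => (hb i).1) (fun i j => hbound (hb i).2 (hb j).2)
    refine ⟨∑ i, (m i : ℝ) • b i, L.sum_mem fun i _ => ?_, fun hzero => hm (funext fun i => ?_),
      hBm, ?_⟩
    · rw [Int.cast_smul_eq_zsmul]
      exact L.smul_mem _ (hb i).1
    · exact_mod_cast Fintype.linearIndependent_iff.1 b.linearIndependent _ hzero i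
    · calc ‖g (∑ i, (m i : ℝ) • b i)‖ ≤ ∑ i, |(m i : ℝ)| * ‖g (b i)‖ := by
            simpa [norm_smul] using norm_sum_le Finset.univ fun i => (m i : ℝ) • g (b i)
        _ ≤ ∑ i, |(m i : ℝ)| * R := by gcongr with i; exact (hb i).2
        _ = (∑ i, |(m i : ℝ)|) * R := (Finset.sum_mul ..).symm
        _ ≤ max ε (P * R) := le_max_of_le_right (by gcongr)

end IsotropicVector

section HyperbolicRotation

variable {K E : Type*} [Field K] [AddCommGroup E] [Module K E]

/-- The hyperbolic rotation (Lorentz boost) in the plane of two isotropic vectors with `B u w = 1`: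
it scales `u` by `t⁻¹` and `w` by `t`, and fixes the orthogonal complement of both. It is encoded as
a product of two transvections, which makes its determinant immediate. -/
def hyperbolicRotation (B : LinearMap.BilinForm K E) (u w : E) (t : K) : E →ₗ[K] E :=
  LinearMap.transvection (B w) ((t⁻¹ - 1) • u) ∘ₗ LinearMap.transvection (B u) ((t - 1) • w)

namespace hyperbolicRotation

variable {B : LinearMap.BilinForm K E} {u w : E} {t : K}

lemma apply_eq (hww : B w w = 0) (x : E) :
    hyperbolicRotation B u w t x = x + ((t - 1) * B u x) • w + ((t⁻¹ - 1) * B w x) • u := by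
  simp only [hyperbolicRotation, LinearMap.comp_apply, LinearMap.transvection.apply, map_add,
    map_smul, hww]
  module

lemma bilinForm_left_apply (huu : B u u = 0) (hww : B w w = 0) (huw : B u w = 1) (x : E) :
    B u (hyperbolicRotation B u w t x) = t * B u x := by
  simp only [apply_eq hww, map_add, map_smul, smul_eq_mul, huu, huw]
  ring

lemma bilinForm_right_apply (hB : B.IsSymm) (hww : B w w = 0) (huw : B u w = 1) (x : E) :
    B w (hyperbolicRotation B u w t x) = t⁻¹ * B w x := by
  simp only [apply_eq hww, map_add, map_smul, smul_eq_mul, hww, (hB.eq w u).trans huw]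
  ring

lemma bilinForm_apply_apply (hB : B.IsSymm) (huu : B u u = 0) (hww : B w w = 0)
    (huw : B u w = 1) (ht : t ≠ 0) (x y : E) :
    B (hyperbolicRotation B u w t x) (hyperbolicRotation B u w t y) = B x y := by
  rw [apply_eq hww x]
  simp only [map_add, LinearMap.add_apply, map_smul, LinearMap.smul_apply, smul_eq_mul,
    bilinForm_left_apply huu hww huw, bilinForm_right_apply hB hww huw]
  simp only [apply_eq hww y, map_add, map_smul, smul_eq_mul, hB.eq x w, hB.eq x u]
  field_simp
  ring

lemma det_eq_one [FiniteDimensional K E] (hB : B.IsSymm) (huw : B u w = 1) (ht : t ≠ 0) :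
    LinearMap.det (hyperbolicRotation B u w t) = 1 := by
  have hwu : B w u = 1 := (hB.eq w u).trans huw
  simp [hyperbolicRotation, LinearMap.det_comp, LinearMap.transvection.det, huw, hwu, ht]

end hyperbolicRotation

end HyperbolicRotation

section HyperbolicLattice

variable {E : Type*} [NormedAddCommGroup E] [InnerProductSpace ℝ E] [FiniteDimensional ℝ E]
  {L : Submodule ℤ E} [DiscreteTopology L] [IsZLattice ℝ L]
  {B : LinearMap.BilinForm ℝ E} {u v w : E}

lemma exists_forall_pos_exists_isotropic_abs_le (hBL : L ≤ B.dualSubmodule L) (hvL : v ∈ L)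
    (hv : v ≠ 0) (hBv : B v v = 0) (hB : B.IsSymm) (huu : B u u = 0) (hww : B w w = 0)
    (huw : B u w = 1) :
    ∃ C > 0, ∀ t > 0, ∃ x ∈ L, x ≠ 0 ∧ B x x = 0 ∧ |B u x| ≤ C / t ∧ |B w x| ≤ C * t := by
  obtain ⟨D, hD, hmain⟩ := exists_forall_isometry_exists_isotropic_norm_le hBL hvL hv hBv
  obtain ⟨K, hK, hBK⟩ := B.toContinuousBilinearMap.isBoundedBilinearMap.bound
  have hu : u ≠ 0 := fun h => by simp [h] at huw
  refine ⟨K * (‖u‖ + ‖w‖) * D, by positivity, fun t ht => ?_⟩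
  obtain ⟨x, hxL, hx, hBx, hgx⟩ := hmain (hyperbolicRotation B u w t)
    (by rw [hyperbolicRotation.det_eq_one hB huw ht.ne', abs_one])
    (hyperbolicRotation.bilinForm_apply_apply hB huu hww huw ht.ne')
  have hbound (z : E) (hz : ‖z‖ ≤ ‖u‖ + ‖w‖) :
      |B z (hyperbolicRotation B u w t x)| ≤ K * (‖u‖ + ‖w‖) * D :=
    (hBK z _).trans (by gcongr)
  have hux := hbound u (le_add_of_nonneg_right (norm_nonneg w))
  have hwx := hbound w (le_add_of_nonneg_left (norm_nonneg u))
  rw [hyperbolicRotation.bilinForm_left_apply huu hww huw, abs_mul, abs_of_pos ht] at hux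
  rw [hyperbolicRotation.bilinForm_right_apply hB hww huw, abs_mul, abs_of_pos (inv_pos.2 ht)]
    at hwx
  exact ⟨x, hxL, hx, hBx, (le_div_iff₀' ht).2 hux, by rwa [inv_mul_le_iff₀' ht] at hwx⟩

end HyperbolicLattice

section Sphere

open WithLp (toLp)

variable {ι : Type*} [Fintype ι]

/-- The lattice `ℤ^κ` in Euclidean space, presented as the span of the standard basis so that the
`IsZLattice` instance is found. -/
abbrev integerLattice (κ : Type*) [Fintype κ] : Submodule ℤ (EuclideanSpace ℝ κ) :=
  Submodule.span ℤ (Set.range (EuclideanSpace.basisFun κ ℝ).toBasis)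

lemma mem_integerLattice_iff {x : EuclideanSpace ℝ ι} :
    x ∈ integerLattice ι ↔ ∃ n : ι → ℤ, ∀ i, (n i : ℝ) = x i := by
  rw [Basis.mem_span_iff_repr_mem]
  simp [Classical.skolem]

variable (ι) in
/-- The Lorentz form `x₀ y₀ - ∑ xᵢ yᵢ` on `ℝ^{1+ι}`, whose isotropic vectors are the homogeneous
coordinates of points of the unit sphere. The time coordinate `x₀` is the one indexed by `none`. -/
noncomputable def lorentzForm : LinearMap.BilinForm ℝ (EuclideanSpace ℝ (Option ι)) :=
  LinearMap.mk₂ ℝ (fun x y => x none * y none - ∑ i, x (some i) * y (some i))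
    (fun x y z => by simp only [PiLp.add_apply, add_mul, Finset.sum_add_distrib]; ring)
    (fun c x y => by simp only [PiLp.smul_apply, smul_eq_mul, mul_assoc, ← Finset.mul_sum]; ring)
    (fun x y z => by simp only [PiLp.add_apply, mul_add, Finset.sum_add_distrib]; ring)
    (fun c x y => by
      simp only [PiLp.smul_apply, smul_eq_mul, mul_left_comm, ← Finset.mul_sum]; ring)

lemma lorentzForm_apply (x y : EuclideanSpace ℝ (Option ι)) :
    lorentzForm ι x y = x none * y none - ∑ i, x (some i) * y (some i) :=
  rfl

lemma lorentzForm_isSymm : (lorentzForm ι).IsSymm :=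
  ⟨fun x y => by simp only [lorentzForm_apply, mul_comm]⟩

lemma integerLattice_le_dualSubmodule_lorentzForm :
    integerLattice (Option ι) ≤ (lorentzForm ι).dualSubmodule (integerLattice (Option ι)) := by
  intro x hx y hy
  obtain ⟨m, hm⟩ := mem_integerLattice_iff.1 hx
  obtain ⟨n, hn⟩ := mem_integerLattice_iff.1 hy
  refine Submodule.mem_one.2 ⟨m none * n none - ∑ i, m (some i) * n (some i), ?_⟩
  simp [lorentzForm_apply, hm, hn]

/-- The vector of `ℝ^{1+ι}` with time coordinate `c` and space coordinates `a`. -/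
def spacetimeVector (c : ℝ) (a : ι → ℝ) : EuclideanSpace ℝ (Option ι) := toLp 2 fun o => o.elim c a

lemma lorentzForm_spacetimeVector_left (c : ℝ) (a : ι → ℝ) (x : EuclideanSpace ℝ (Option ι)) :
    lorentzForm ι (spacetimeVector c a) x = c * x none - ∑ i, a i * x (some i) :=
  rfl

lemma lorentzForm_spacetimeVector (c c' : ℝ) (a a' : ι → ℝ) :
    lorentzForm ι (spacetimeVector c a) (spacetimeVector c' a') = c * c' - ∑ i, a i * a' i :=
  rfl

lemma eq_zero_of_lorentzForm_self_eq_zero {x : EuclideanSpace ℝ (Option ι)}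
    (hx : lorentzForm ι x x = 0) (hx0 : x none = 0) : x = 0 := by
  rw [lorentzForm_apply, hx0, zero_mul, zero_sub, neg_eq_zero,
    Finset.sum_eq_zero_iff_of_nonneg fun i _ => mul_self_nonneg _] at hx
  ext o
  rcases o with _ | i
  · exact hx0
  · exact mul_self_eq_zero.1 (hx i (Finset.mem_univ i))

lemma exists_isotropic_mem_integerLattice [Nonempty ι] :
    ∃ v ∈ integerLattice (Option ι), v ≠ 0 ∧ lorentzForm ι v v = 0 := by
  classical
  let k : ι := Classical.arbitrary ι
  refine ⟨spacetimeVector 1 (Pi.single k 1), mem_integerLattice_iff.2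
    ⟨fun o => o.elim 1 (Pi.single k 1), ?_⟩, fun h => ?_, ?_⟩
  · rintro (_ | i)
    · simp [spacetimeVector]
    · simp [spacetimeVector, Pi.single_apply]
  · simpa [spacetimeVector] using congr_arg (fun x => x none) h
  · simp [lorentzForm_spacetimeVector, Pi.single_apply]

lemma exists_forall_pos_exists_int_sum_sq_eq_abs_le {ξ : ι → ℝ} (hξ : ∑ i, ξ i ^ 2 = 1) :
    ∃ C > 0, ∀ t > 0, ∃ (q : ℤ) (a : ι → ℤ), q ≠ 0 ∧ ∑ i, a i ^ 2 = q ^ 2 ∧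
      |q - ∑ i, ξ i * a i| ≤ C / t ∧ |q + ∑ i, ξ i * a i| ≤ C * t := by
  have hξξ : ∑ i, ξ i * ξ i = 1 := by simpa only [sq] using hξ
  have : Nonempty ι := by
    by_contra hempty
    simp [not_nonempty_iff.1 hempty] at hξ
  obtain ⟨v, hvL, hv, hBv⟩ := exists_isotropic_mem_integerLattice (ι := ι)
  let u : EuclideanSpace ℝ (Option ι) := spacetimeVector 1 ξ
  let w : EuclideanSpace ℝ (Option ι) := (2⁻¹ : ℝ) • spacetimeVector 1 (-ξ)
  have huu : lorentzForm ι u u = 0 := by simp [u, lorentzForm_spacetimeVector, hξξ]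
  have hww : lorentzForm ι w w = 0 := by simp [w, lorentzForm_spacetimeVector, hξξ]
  have huw : lorentzForm ι u w = 1 := by
    norm_num [u, w, lorentzForm_spacetimeVector, hξξ]
  obtain ⟨C, hC, hmain⟩ := exists_forall_pos_exists_isotropic_abs_le
    integerLattice_le_dualSubmodule_lorentzForm hvL hv hBv lorentzForm_isSymm huu hww huw
  refine ⟨2 * C, by positivity, fun t ht => ?_⟩
  obtain ⟨x, hxL, hx, hBx, hux, hwx⟩ := hmain t ht
  obtain ⟨n, hn⟩ := mem_integerLattice_iff.1 hxL
  refine ⟨n none, fun i => n (some i), fun h => ?_, ?_, ?_, ?_⟩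
  · exact hx (eq_zero_of_lorentzForm_self_eq_zero hBx (by rw [← hn, h, Int.cast_zero]))
  · rw [lorentzForm_apply, sub_eq_zero] at hBx
    simp only [← hn, ← sq] at hBx
    exact_mod_cast hBx.symm
  · simp only [u, lorentzForm_spacetimeVector_left, one_mul, ← hn] at hux
    exact hux.trans (by gcongr; linarith)
  · simp only [w, map_smul, LinearMap.smul_apply, lorentzForm_spacetimeVector_left, one_mul, ← hn,
      Pi.neg_apply, neg_mul, Finset.sum_neg_distrib, sub_neg_eq_add, smul_eq_mul, abs_mul,
      abs_of_pos (inv_pos.2 (two_pos (α := ℝ)))] at hwx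
    linarith

lemma exists_forall_pos_exists_one_le_sum_sq_eq {ξ : ι → ℝ} (hξ : ∑ i, ξ i ^ 2 = 1) :
    ∃ C > 0, ∀ t > 0, ∃ (q : ℤ) (a : ι → ℤ), 1 ≤ q ∧ ∑ i, a i ^ 2 = q ^ 2 ∧
      q - ∑ i, ξ i * a i ≤ C / t ∧ q + ∑ i, ξ i * a i ≤ C * t := by
  obtain ⟨C, hC, hmain⟩ := exists_forall_pos_exists_int_sum_sq_eq_abs_le hξ
  refine ⟨C, hC, fun t ht => ?_⟩
  obtain ⟨q, a, hq, ha, hsub, hadd⟩ := hmain t ht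
  rw [abs_le] at hsub hadd
  rcases hq.lt_or_gt with hneg | hpos
  · refine ⟨-q, -a, by omega, by simpa using ha, ?_, ?_⟩ <;>
    · simp only [Pi.neg_apply, Int.cast_neg, mul_neg, Finset.sum_neg_distrib]
      linarith
  · exact ⟨q, a, hpos, ha, hsub.2, hadd.2⟩

end Sphere

section RationalPoint

variable {ι : Type*} [Fintype ι]

lemma eq_of_sum_sub_sq_nonpos {x y : ι → ℝ} (h : ∑ i, (x i - y i) ^ 2 ≤ 0) (i : ι) :
    x i = y i := by
  have hi : (x i - y i) ^ 2 ≤ 0 :=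
    (Finset.single_le_sum (f := fun i => (x i - y i) ^ 2) (fun i _ => sq_nonneg _)
      (Finset.mem_univ i)).trans h
  exact sub_eq_zero.1 (pow_eq_zero_iff two_ne_zero |>.1 (hi.antisymm (sq_nonneg _)))

lemma sum_div_sub_div_sq {K : Type*} [Field K] {q p : K} {a b : ι → K} (hq : q ≠ 0) (hp : p ≠ 0)
    (ha : ∑ i, a i ^ 2 = q ^ 2) (hb : ∑ i, b i ^ 2 = p ^ 2) :
    ∑ i, (a i / q - b i / p) ^ 2 = 2 * (q * p - ∑ i, a i * b i) / (q * p) := by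
  have hterm (i : ι) : (a i / q - b i / p) ^ 2 =
      a i ^ 2 / q ^ 2 + b i ^ 2 / p ^ 2 - 2 * (a i * b i) / (q * p) := by
    field_simp
    ring
  simp only [hterm, Finset.sum_sub_distrib, Finset.sum_add_distrib, ← Finset.sum_div,
    ← Finset.mul_sum, ha, hb]
  field_simp
  ring

lemma intCast_div_eq_of_sum_sq_lt {q p : ℤ} {a b : ι → ℤ} (hq : 0 < q) (hp : 0 < p)
    (ha : ∑ i, a i ^ 2 = q ^ 2) (hb : ∑ i, b i ^ 2 = p ^ 2)
    (h : ∑ i, ((a i : ℝ) / q - b i / p) ^ 2 < 2 / (q * p)) (i : ι) : (a i : ℝ) / q = b i / p := by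
  have hq' : (0 : ℝ) < q := by exact_mod_cast hq
  have hp' : (0 : ℝ) < p := by exact_mod_cast hp
  have hdist := sum_div_sub_div_sq (a := fun i => (a i : ℝ)) (b := fun i => (b i : ℝ))
    hq'.ne' hp'.ne' (by exact_mod_cast ha) (by exact_mod_cast hb)
  have hint : q * p - ∑ i, a i * b i ≤ 0 := by
    rw [hdist, div_lt_div_iff_of_pos_right (by positivity)] at h
    have : (q : ℝ) * p - ∑ i, (a i : ℝ) * b i < 1 := by linarith
    exact Int.lt_add_one_iff.1 (by exact_mod_cast this)
  have hle : ∑ i, ((a i : ℝ) / q - b i / p) ^ 2 ≤ 0 := by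
    rw [hdist]
    have : (q : ℝ) * p - ∑ i, (a i : ℝ) * b i ≤ 0 := by exact_mod_cast hint
    exact div_nonpos_of_nonpos_of_nonneg (by linarith) (by positivity)
  exact eq_of_sum_sub_sq_nonpos hle i

lemma intCast_div_eq_of_approx {ξ : ι → ℝ} {q p : ℤ} {a b : ι → ℤ} {S : ℝ} (hq : 0 < q)
    (hp : 0 < p) (ha : ∑ i, a i ^ 2 = q ^ 2) (hb : ∑ i, b i ^ 2 = p ^ 2) (hS : q + p < S)
    (haξ : ∑ i, (ξ i - a i / q) ^ 2 ≤ 1 / (q * S)) (hbξ : ∑ i, (ξ i - b i / p) ^ 2 ≤ 1 / (p * S))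
    (i : ι) : (a i : ℝ) / q = b i / p := by
  refine intCast_div_eq_of_sum_sq_lt hq hp ha hb ?_ i
  have hq' : (0 : ℝ) < q := by exact_mod_cast hq
  have hp' : (0 : ℝ) < p := by exact_mod_cast hp
  have hS' : 0 < S := by linarith
  calc ∑ i, ((a i : ℝ) / q - b i / p) ^ 2
      ≤ ∑ i, 2 * ((ξ i - a i / q) ^ 2 + (ξ i - b i / p) ^ 2) := by
        gcongr with i
        simpa [sub_sq_comm, add_comm] using add_sq_le (a := a i / q - ξ i) (b := ξ i - b i / p)
    _ = 2 * (∑ i, (ξ i - a i / q) ^ 2 + ∑ i, (ξ i - b i / p) ^ 2) := by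
        rw [← Finset.mul_sum, Finset.sum_add_distrib]
    _ ≤ 2 * (1 / (q * S) + 1 / (p * S)) := by gcongr
    _ = 2 / (q * p) * ((q + p) / S) := by field_simp; ring
    _ < 2 / (q * p) := mul_lt_of_lt_one_right (by positivity) ((div_lt_one hS').2 hS)

lemma eq_intCast_div_of_forall_approx {ξ : ι → ℝ} {q : ℕ → ℤ} {a : ℕ → ι → ℤ} {S : ℕ → ℝ}
    (hq : ∀ n, 0 < q n) (ha : ∀ n, ∑ i, a n i ^ 2 = q n ^ 2) (hqS : ∀ n, q n + q (n + 1) < S n)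
    (hmono : Monotone S) (hS : Tendsto S atTop atTop)
    (haξ : ∀ n, ∑ i, (ξ i - a n i / q n) ^ 2 ≤ 1 / (q n * S n)) (i : ι) :
    ξ i = a 0 i / q 0 := by
  have hq' (n : ℕ) : (1 : ℝ) ≤ q n := by exact_mod_cast hq n
  have hS' (n : ℕ) : 0 < S n := by linarith [hqS n, hq' n, hq' (n + 1)]
  have hstep (n : ℕ) (i : ι) : (a n i : ℝ) / q n = a (n + 1) i / q (n + 1) := by
    refine intCast_div_eq_of_approx (hq n) (hq (n + 1)) (ha n) (ha (n + 1)) (hqS n) (haξ n)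
      ((haξ (n + 1)).trans ?_) i
    have := hq' (n + 1)
    have := hS' n
    have := hmono n.le_succ
    gcongr
  have hconst (n : ℕ) (i : ι) : (a n i : ℝ) / q n = a 0 i / q 0 := by
    induction n with
    | zero => rfl
    | succ n ih => rw [← hstep, ih]
  have hle (n : ℕ) : ∑ i, (ξ i - a 0 i / q 0) ^ 2 ≤ (S n)⁻¹ := by
    simp only [← hconst n]
    refine (haξ n).trans ?_
    rw [one_div]
    exact inv_anti₀ (hS' n) (le_mul_of_one_le_left (hS' n).le (hq' n))
  exact eq_of_sum_sub_sq_nonpos (ge_of_tendsto' (tendsto_inv_atTop_zero.comp hS) hle) i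

end RationalPoint

section Exponent

lemma eventually_const_mul_rpow_lt_rpow {α β : ℝ} (h : α < β) (c : ℝ) :
    ∀ᶠ T : ℝ in atTop, c * T ^ α < T ^ β := by
  filter_upwards [(tendsto_rpow_atTop (sub_pos.2 h)).eventually_gt_atTop c,
    eventually_gt_atTop 0] with T hc hT
  calc c * T ^ α < T ^ (β - α) * T ^ α := by gcongr
    _ = T ^ β := by rw [← Real.rpow_add hT, sub_add_cancel]

lemma sqrt_le_one_div_rpow_half_iff {X q T : ℝ} (γ : ℝ) (hq : 0 ≤ q) (hT : 0 ≤ T) :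
    √X ≤ 1 / (q ^ ((1 : ℝ) / 2) * T ^ (γ / 2)) ↔ X ≤ 1 / (q * T ^ γ) := by
  have hTγ : T ^ (γ / 2) = √(T ^ γ) := by
    rw [Real.sqrt_eq_rpow, ← Real.rpow_mul hT, mul_one_div]
  rw [Real.sqrt_le_left (by positivity), ← Real.sqrt_eq_rpow, hTγ, div_pow, mul_pow,
    Real.sq_sqrt hq, Real.sq_sqrt (by positivity), one_pow]

variable {d : ℕ} {ξ : Fin d → ℝ} {γ : ℝ}

lemma intrinsicUnifApprox_iff :
    IntrinsicUnifApprox ξ γ ↔ ∀ᶠ T : ℝ in atTop, ∃ (q : ℤ) (a : Fin d → ℤ),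
      0 < q ∧ q ≤ T ∧ ∑ i, a i ^ 2 = q ^ 2 ∧ ∑ i, (ξ i - a i / q) ^ 2 ≤ 1 / (q * T ^ γ) := by
  refine eventually_congr ?_
  filter_upwards [eventually_ge_atTop 0] with T hT
  refine exists_congr fun q => exists_congr fun a => and_congr_right fun (hq : 0 < q) =>
    and_congr_right fun _ =>
      and_congr ?_ (sqrt_le_one_div_rpow_half_iff γ (by exact_mod_cast hq.le) hT)
  have hq0 : (q : ℚ) ≠ 0 := by exact_mod_cast hq.ne'
  simp only [div_pow, ← Finset.sum_div, div_eq_one_iff_eq (pow_ne_zero 2 hq0)]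
  norm_cast

theorem intrinsicUnifApprox_of_lt_one (hξ : ∑ i, ξ i ^ 2 = 1) (hγ : γ < 1) :
    IntrinsicUnifApprox ξ γ := by
  obtain ⟨C, hC, hmain⟩ := exists_forall_pos_exists_one_le_sum_sq_eq hξ
  rw [intrinsicUnifApprox_iff]
  filter_upwards [eventually_const_mul_rpow_lt_rpow hγ (2 * C ^ 2), eventually_ge_atTop C]
    with T hTγ hCT
  have hT : 0 < T := hC.trans_le hCT
  obtain ⟨q, a, hq, ha, hsub, hadd⟩ := hmain (T / C) (by positivity)
  have hq' : (0 : ℝ) < q := by exact_mod_cast hq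
  rw [div_div_eq_mul_div, ← sq] at hsub
  rw [mul_div_cancel₀ _ hC.ne'] at hadd
  refine ⟨q, a, hq, ?_, ha, ?_⟩
  · have : C ^ 2 / T ≤ T := (div_le_iff₀ hT).2 (by nlinarith)
    linarith
  · have hdist := sum_div_sub_div_sq (b := fun i => (a i : ℝ)) one_ne_zero hq'.ne'
      (by simpa using hξ) (by exact_mod_cast ha)
    simp only [div_one, one_mul] at hdist
    calc ∑ i, (ξ i - a i / q) ^ 2 = 2 * (q - ∑ i, ξ i * a i) / q := hdist
      _ ≤ 2 * (C ^ 2 / T) / q := by gcongr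
      _ = 1 / (q * T ^ γ) * (2 * C ^ 2 * T ^ γ / T) := by field_simp
      _ ≤ 1 / (q * T ^ γ) := mul_le_of_le_one_right (by positivity)
          ((div_le_one hT).2 (by simpa using hTγ.le))

theorem exists_ratCast_eq_of_intrinsicUnifApprox (hγ : 1 < γ) (h : IntrinsicUnifApprox ξ γ) :
    ∃ x : Fin d → ℚ, (fun i => (x i : ℝ)) = ξ := by
  obtain ⟨T₀, hT₀⟩ := eventually_atTop.1 ((intrinsicUnifApprox_iff.1 h).and
    (eventually_const_mul_rpow_lt_rpow hγ 3))
  let T (n : ℕ) : ℝ := 2 ^ n * max T₀ 1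
  have hT₀T (n : ℕ) : T₀ ≤ T n := (le_max_left _ _).trans
    (le_mul_of_one_le_left (by positivity) (one_le_pow₀ one_le_two))
  have hT : Tendsto T atTop atTop :=
    (tendsto_pow_atTop_atTop_of_one_lt one_lt_two).atTop_mul_const (by positivity)
  have hmono : Monotone fun n => T n ^ γ := fun m n hmn => by
    simp only [T]
    gcongr
    exact one_le_two
  choose happrox hT3 using fun n => hT₀ (T n) (hT₀T n)
  choose q a hq hqT ha haξ using happrox
  have hqS (n : ℕ) : q n + q (n + 1) < T n ^ γ := by
    have hsucc : T (n + 1) = 2 * T n := by simp only [T]; ring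
    have h3 : 3 * T n < T n ^ γ := by simpa using hT3 n
    linarith [hqT n, hqT (n + 1)]
  refine ⟨fun i => a 0 i / q 0, funext fun i => ?_⟩
  push_cast
  exact (eq_intCast_div_of_forall_approx hq ha hqS hmono
    ((tendsto_rpow_atTop (by linarith)).comp hT) haξ i).symm

end Exponent

/-- Theorem 4: for `d ≥ 2` and irrational `ξ` on the unit sphere, the uniform intrinsic
Diophantine exponent equals `1`: every exponent `γ` with the uniform intrinsic
approximation property satisfies `γ ≤ 1`, and every `γ < 1` has this property. -/
theorem intrinsic_uniform_exponent_eq_one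
    (d : ℕ) (hd : 2 ≤ d) (ξ : Fin d → ℝ)
    (hirr : ¬ ∃ x : Fin d → ℚ, (fun i => (x i : ℝ)) = ξ)
    (hsphere : ∑ i, ξ i ^ 2 = 1) :
    (∀ γ : ℝ, IntrinsicUnifApprox ξ γ → γ ≤ 1) ∧
    (∀ γ : ℝ, γ < 1 → IntrinsicUnifApprox ξ γ) := by
  refine ⟨fun γ happrox => ?_, fun γ hγ => intrinsicUnifApprox_of_lt_one hsphere hγ⟩
  by_contra! hγ
  exact hirr (exists_ratCast_eq_of_intrinsicUnifApprox hγ happrox)
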